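/- arXiv:math/0211380 — 2 statements merged into one kernel-verified Lean document; each statement's English description precedes it below -/
import Mathlib

section
/- (Noonan) For n ≥ 3, the number of permutations of [n] containing exactly one occurrence of the pattern 321 is C^{(6)}_{n−3} = (3/n)·C(2n, n−3). -/
/-!
Burstein's argument. Let `π` contain exactly one 321, with values `c > b > a`, and write
`π = α c β b γ a δ`. Uniqueness forces every other entry to the left of the middle entry to be
smaller than `b` and every other entry to its right to be larger, so `b` is a fixed point. The words
`α b β a` and `c γ b δ` are then 321-avoiding permutations of `{0, …, b}` and `{b, …, N - 1}`, the
first not ending in its maximum and the second not starting with its minimum. Conversely, any two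
such words glue back to a permutation with exactly one 321 (`glue`, `uniqueOccAt_glue`,
`exists_glue`, `glue_injective`). Order reversal turns the second kind of word into the first kind,
so the count is a convolution over `b` (`card_one321`).

The 321-avoiders of `{0, …, n}` with last value `v` are counted by the ballot triangle entry
`C^{(n+1-v)}_v` (`card_avoidLast`). The recurrence behind this comes from the penultimate value `u`:
if `u < v`, then `v` can be raised step by step to the maximum without creating a 321, and it can be
deleted there; if `u > v`, then `u` is the maximum and can be deleted. Hence the avoiders of
`{0, …, b}` not ending in `b` number `C^{(3)}_{b-1}` (`card_lowerPart`).

Finally `C^{(k)}_n` is the `n`-th coefficient of the `k`-th power of the Catalan series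
(`coeff_catalanSeries_pow`), so the convolution of `C^{(3)}` with itself is `C^{(6)}`.
-/

/-- The ballot number `C^{(k)}_n = C(2n+k-1, n) - C(2n+k-1, n-1)`, with `C(a,-1) = 0`. -/
def ballot (k n : ℕ) : ℕ :=
  Nat.choose (2 * n + k - 1) n - (if n = 0 then 0 else Nat.choose (2 * n + k - 1) (n - 1))

/-- The number of occurrences of the pattern 321 in a permutation of `{0,…,n-1}`:
triples of positions `i < j < k` with `π i > π j > π k`. -/
noncomputable def occ321Count (n : ℕ) (π : Equiv.Perm (Fin n)) : ℕ :=
  Nat.card {t : Fin n × Fin n × Fin n //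
    t.1 < t.2.1 ∧ t.2.1 < t.2.2 ∧ π t.2.2 < π t.2.1 ∧ π t.2.1 < π t.1}

/-! ### Ballot numbers -/

theorem cast_ballot_succ (k n : ℕ) :
    (ballot k (n + 1) : ℤ) = (2 * n + k + 1).choose (n + 1) - (2 * n + k + 1).choose n := by
  have hle : (2 * n + k + 1).choose n ≤ (2 * n + k + 1).choose (n + 1) := by
    rcases Nat.eq_zero_or_pos k with rfl | hk
    · exact (Nat.choose_symm_half n).ge
    · exact Nat.choose_le_succ_of_lt_half_left (by omega)
  have e : 2 * (n + 1) + k - 1 = 2 * n + k + 1 := by omega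
  simp only [ballot, e, Nat.add_sub_cancel, if_neg (Nat.succ_ne_zero n)]
  push_cast [Nat.cast_sub hle]
  rfl

theorem ballot_zero_right (k : ℕ) : ballot k 0 = 1 := by simp [ballot]

theorem ballot_zero_left (n : ℕ) : ballot 0 (n + 1) = 0 := by
  have h := cast_ballot_succ 0 n
  rw [Nat.add_zero, Nat.choose_symm_half n] at h
  simpa using h

/-- The ballot recurrence. In terms of the Catalan series `c` it is the coefficient form of
`c ^ (k + 1) = c ^ k + X * c ^ (k + 2)`. -/
theorem ballot_rec (k n : ℕ) : ballot (k + 1) (n + 1) = ballot k (n + 1) + ballot (k + 2) n := by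
  zify
  rw [cast_ballot_succ, cast_ballot_succ]
  have e : 2 * n + (k + 1) + 1 = (2 * n + k + 1) + 1 := by omega
  rw [e, Nat.choose_succ_succ]
  rcases n with _ | n
  · simp [ballot_zero_right]
  · rw [cast_ballot_succ, Nat.choose_succ_succ (2 * (n + 1) + k + 1) n,
      show 2 * n + (k + 2) + 1 = 2 * (n + 1) + k + 1 by omega]
    push_cast
    ring

/-- `C^{(k)}_n` is the coefficient of `X ^ n` in the `k`-th power of the Catalan series: both sides
satisfy the same recurrence and have the same boundary values. -/
theorem coeff_catalanSeries_pow (n k : ℕ) :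
    PowerSeries.coeff n (PowerSeries.catalanSeries ^ k) = ballot k n := by
  induction n generalizing k with
  | zero =>
    rw [ballot_zero_right, PowerSeries.coeff_zero_eq_constantCoeff_apply, map_pow,
      PowerSeries.catalanSeries_constantCoeff, one_pow]
  | succ n ihn =>
    induction k with
    | zero => rw [ballot_zero_left]; simp [PowerSeries.coeff_one]
    | succ k ihk =>
      have h : PowerSeries.catalanSeries ^ (k + 1) =
          PowerSeries.catalanSeries ^ k + PowerSeries.catalanSeries ^ (k + 2) * PowerSeries.X := by
        rw [pow_succ]
        nth_rw 2 [← PowerSeries.catalanSeries_sq_mul_X_add_one]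
        ring
      rw [h, map_add, PowerSeries.coeff_succ_mul_X, ihk, ihn, ballot_rec]

/-- The convolution identity, read off from `c ^ 3 * c ^ 3 = c ^ 6`. -/
theorem sum_ballot_three (m : ℕ) :
    ∑ i ∈ Finset.range (m + 1), ballot 3 i * ballot 3 (m - i) = ballot 6 m := by
  rw [← Finset.Nat.sum_antidiagonal_eq_sum_range_succ (fun i j => ballot 3 i * ballot 3 j),
    ← coeff_catalanSeries_pow m 6, show 6 = 3 + 3 from rfl, pow_add, PowerSeries.coeff_mul]
  simp [coeff_catalanSeries_pow]

/-- The row sums of the ballot triangle `(n, u) ↦ C^{(n+1-u)}_u` give its next row. -/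
theorem sum_ballot_row (n v : ℕ) (hv : v ≤ n + 1) :
    ∑ u ∈ Finset.range (v + 1), ballot (n + 1 - u) u = ballot (n + 2 - v) v := by
  induction v with
  | zero => simp [ballot_zero_right]
  | succ v ih =>
    rw [Finset.sum_range_succ, ih (by omega), show n + 2 - v = (n - v) + 2 by omega,
      show n + 1 - (v + 1) = n - v by omega, show n + 2 - (v + 1) = (n - v) + 1 by omega,
      ballot_rec, add_comm]

/-- The closed form `C^{(6)}_m = 3 / (m + 3) * C(2 (m + 3), m)`, without division. -/
theorem mul_ballot_six (m : ℕ) :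
    (m + 3) * ballot 6 m = 3 * Nat.choose (2 * (m + 3)) m := by
  rcases m with _ | p
  · simp [ballot_zero_right]
  · have h := Nat.choose_succ_right_eq (2 * p + 7) p
    rw [show 2 * p + 7 - p = p + 7 by omega] at h
    rw [show 2 * (p + 1 + 3) = (2 * p + 7) + 1 by omega, Nat.choose_succ_succ]
    zify at h ⊢
    rw [cast_ballot_succ]
    linear_combination h

/-! ### 321-avoiding permutations by last value -/

/-- `σ` avoids the pattern 321. -/
def Avoids321 {N : ℕ} (σ : Equiv.Perm (Fin N)) : Prop :=
  ∀ i j k, i < j → j < k → σ j < σ i → σ k < σ j → False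

/-- A permutation fixing everything above `n` maps `{0, …, n}` to itself. -/
theorem fix_above_le {N : ℕ} {σ : Equiv.Perm (Fin N)} {n : Fin N} (h : ∀ i, n < i → σ i = i)
    {i : Fin N} (hi : i ≤ n) : σ i ≤ n := by
  by_contra! hc
  have := σ.injective (h _ hc)
  omega

/-- A permutation fixing everything below `n` maps `{n, …, N - 1}` to itself. -/
theorem fix_below_ge {N : ℕ} {σ : Equiv.Perm (Fin N)} {n : Fin N} (h : ∀ i, i < n → σ i = i)
    {i : Fin N} (hi : n ≤ i) : n ≤ σ i := by
  by_contra! hc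
  have := σ.injective (h _ hc)
  omega

open Classical in
/-- The 321-avoiding permutations of the initial segment `{0, …, n}` (extended by the identity)
whose last value is `v`. All permutations live in the fixed type `Perm (Fin N)`, so that restricting
to a segment is a condition on the fixed points. -/
noncomputable def avoidLast {N : ℕ} (n v : Fin N) : Finset (Equiv.Perm (Fin N)) :=
  {σ | Avoids321 σ ∧ (∀ i, n < i → σ i = i) ∧ σ n = v}

theorem mem_avoidLast {N : ℕ} {n v : Fin N} {σ : Equiv.Perm (Fin N)} :
    σ ∈ avoidLast n v ↔ Avoids321 σ ∧ (∀ i, n < i → σ i = i) ∧ σ n = v := by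
  simp [avoidLast]

/-- Exchanging the adjacent values `v` and `w = v + 1` preserves 321-avoidance when it removes an
inversion: every inversion of `swap v w * σ` is one of `σ`. -/
theorem avoids_swap_of_lt {N : ℕ} {σ : Equiv.Perm (Fin N)} {v w p m : Fin N} (hvw : v.val + 1 = w.val)
    (hm : σ m = v) (hp : σ p = w) (hpm : p < m) (h : Avoids321 σ) :
    Avoids321 (Equiv.swap v w * σ) := by
  have key : ∀ x y, x < y → (Equiv.swap v w * σ) y < (Equiv.swap v w * σ) x → σ y < σ x := by
    intro x y hxy hlt
    have h1 : σ x = v → x = m := fun e => σ.injective (e.trans hm.symm)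
    have h2 : σ y = w → y = p := fun e => σ.injective (e.trans hp.symm)
    have h3 : σ x = σ y → x = y := fun e => σ.injective e
    simp only [Equiv.Perm.mul_apply, Equiv.swap_apply_def] at hlt
    split_ifs at hlt <;> grind
  exact fun i j k hij hjk h1 h2 => h i j k hij hjk (key _ _ hij h1) (key _ _ hjk h2)

/-- If the positions `n`, `m = n + 1` end the support, `σ m = w = v + 1` and `σ n < v`, then
exchanging the values `v` and `w` preserves 321-avoidance. The only new inversion is the one between
the old position `p` of `v` and `m`; a larger value before `p` would already form a 321 with the
values at `p` and `n`. -/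
theorem avoids_swap_of_gt {N : ℕ} {σ : Equiv.Perm (Fin N)} {v w p n m : Fin N}
    (hvw : v.val + 1 = w.val) (hnm : n.val + 1 = m.val) (hfix : ∀ i, m < i → σ i = i)
    (hm : σ m = w) (hp : σ p = v) (hn : σ n < v) (h : Avoids321 σ) :
    Avoids321 (Equiv.swap v w * σ) := by
  have key : ∀ x y, x < y → (Equiv.swap v w * σ) y < (Equiv.swap v w * σ) x →
      σ y < σ x ∨ (x = p ∧ y = m) := by
    intro x y hxy hlt
    have h1 : σ x = v → x = p := fun e => σ.injective (e.trans hp.symm)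
    have h2 : σ y = w → y = m := fun e => σ.injective (e.trans hm.symm)
    have h3 : σ x = σ y → x = y := fun e => σ.injective e
    simp only [Equiv.Perm.mul_apply, Equiv.swap_apply_def] at hlt
    split_ifs at hlt <;> grind
  have hpm : p < n := by
    have h1 : p ≠ n := by rintro rfl; omega
    have h2 : p ≠ m := by rintro rfl; omega
    have h3 : ¬ m < p := fun hc => by
      have := hfix p hc
      have := fix_above_le hfix le_rfl
      omega
    omega
  intro i j k hij hjk h1 h2
  rcases key _ _ hij h1 with a1 | ⟨rfl, rfl⟩
  · rcases key _ _ hjk h2 with a2 | ⟨rfl, rfl⟩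
    · exact h _ _ _ hij hjk a1 a2
    · exact h i j n hij hpm a1 (by omega)
  · have hk := hfix k hjk
    have := fix_above_le hfix le_rfl
    rcases key _ _ hjk h2 with a2 | ⟨rfl, rfl⟩ <;> omega

open Classical in
/-- With the penultimate value `u` fixed, the number of avoiders with last value `v > u` does not
change when `v` is raised by one. -/
theorem card_shift {N : ℕ} {n m v w u : Fin N} (hnm : n.val + 1 = m.val) (hvw : v.val + 1 = w.val)
    (huv : u < v) (hwm : w ≤ m) :
    ((avoidLast m v).filter (fun σ => σ n = u)).card =
      ((avoidLast m w).filter (fun σ => σ n = u)).card := by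
  have hvw' : v ≠ w := by omega
  refine Finset.card_nbij' (fun σ => Equiv.swap v w * σ) (fun σ => Equiv.swap v w * σ)
    ?_ ?_ ?_ ?_
  · intro σ hσ
    simp only [Finset.coe_filter, Set.mem_ofPred_eq, mem_avoidLast] at hσ ⊢
    obtain ⟨⟨ha, hf, hm⟩, hn⟩ := hσ
    refine ⟨⟨avoids_swap_of_lt (p := σ.symm w) (m := m) hvw hm (by simp) ?_ ha, ?_, ?_⟩, ?_⟩
    · by_contra! hc
      have h1 : σ (σ.symm w) = w := by simp
      rcases hc.lt_or_eq with h | h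
      · rw [hf _ h] at h1
        omega
      · rw [← h, hm] at h1
        exact hvw' h1
    · intro i hi
      rw [Equiv.Perm.mul_apply, hf i hi, Equiv.swap_apply_of_ne_of_ne] <;> omega
    · simp [hm]
    · rw [Equiv.Perm.mul_apply, hn, Equiv.swap_apply_of_ne_of_ne] <;> omega
  · intro σ hσ
    simp only [Finset.coe_filter, Set.mem_ofPred_eq, mem_avoidLast] at hσ ⊢
    obtain ⟨⟨ha, hf, hm⟩, hn⟩ := hσ
    refine ⟨⟨avoids_swap_of_gt (p := σ.symm v) (m := m) hvw hnm hf hm (by simp) (by omega) ha,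
      ?_, ?_⟩, ?_⟩
    · intro i hi
      rw [Equiv.Perm.mul_apply, hf i hi, Equiv.swap_apply_of_ne_of_ne] <;> omega
    · simp [hm]
    · rw [Equiv.Perm.mul_apply, hn, Equiv.swap_apply_of_ne_of_ne] <;> omega
  · intro σ _
    simp
  · intro σ _
    simp

open Classical in
/-- The avoiders of `{0, …, m}` ending in `u, v` with `u < v` are equinumerous with those of
`{0, …, m - 1}` ending in `u`: raise `v` to the maximum `m`, which is then a fixed point. -/
theorem card_last_two {N : ℕ} {n m u : Fin N} (hnm : n.val + 1 = m.val) (v : Fin N)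
    (huv : u < v) (hvm : v ≤ m) :
    ((avoidLast m v).filter (fun σ => σ n = u)).card = (avoidLast n u).card := by
  obtain ⟨d, hd⟩ : ∃ d, v.val + d = m.val := ⟨m.val - v.val, by omega⟩
  induction d generalizing v with
  | zero =>
    obtain rfl : v = m := by omega
    congr 1
    ext σ
    simp only [Finset.mem_filter, mem_avoidLast]
    constructor
    · rintro ⟨⟨ha, hf, hm⟩, hn⟩
      refine ⟨ha, fun i hi => ?_, hn⟩
      rcases eq_or_ne i v with rfl | h
      · exact hm
      · exact hf i (by omega)
    · rintro ⟨ha, hf, hn⟩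
      exact ⟨⟨ha, fun i hi => hf i (by omega), hf _ (by omega)⟩, hn⟩
  | succ d ih =>
    have hw : v.val + 1 < N := by omega
    rw [card_shift (w := ⟨v.val + 1, hw⟩) hnm rfl huv (by rw [Fin.le_def]; simp; omega)]
    exact ih _ (by rw [Fin.lt_def] at *; simp; omega) (by rw [Fin.le_def]; simp; omega)
      (by simp; omega)

open Classical in
/-- If the penultimate value is not below the last value `v`, it has to be the maximum `m`, since
otherwise `m` starts a 321. Exchanging the last two positions makes `m` a fixed point and leaves an
avoider of `{0, …, m - 1}` ending in `v`. For `v = m` both sides are empty. -/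
theorem card_last_ge {N : ℕ} {n m v : Fin N} (hnm : n.val + 1 = m.val) (hvm : v ≤ m) :
    ((avoidLast m v).filter (fun σ => ¬ σ n < v)).card = (avoidLast n v).card := by
  have hne : n ≠ m := by omega
  refine Finset.card_nbij' (fun σ => σ * Equiv.swap n m) (fun σ => σ * Equiv.swap n m)
    ?_ ?_ ?_ ?_
  · intro σ hσ
    simp only [Finset.coe_filter, Set.mem_ofPred_eq, Finset.mem_coe, mem_avoidLast] at hσ ⊢
    obtain ⟨⟨ha, hf, hm⟩, hn⟩ := hσ
    have hnv : σ n ≠ v := fun e => hne (σ.injective (e.trans hm.symm))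
    have hnm' : σ n ≤ m := fix_above_le hf (by omega)
    have htop : σ n = m := by
      by_contra hc
      have h1 : σ (σ.symm m) = m := by simp
      have h2 : σ.symm m < n := by
        by_contra! h
        rcases h.lt_or_eq with h | h
        · by_cases h3 : σ.symm m = m
          · rw [h3] at h1
            omega
          · rw [hf _ (by omega)] at h1
            exact h3 h1
        · rw [← h] at h1
          exact hc h1
      exact ha _ n m h2 (by omega) (by omega) (by omega)
    have hf' : ∀ i, n < i → (σ * Equiv.swap n m) i = i := by
      intro i hi
      rcases eq_or_ne i m with rfl | h
      · simp [htop]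
      · rw [Equiv.Perm.mul_apply, Equiv.swap_apply_of_ne_of_ne (by omega) h, hf _ (by omega)]
    refine ⟨?_, hf', by simp [hm]⟩
    have hb : ∀ x, x ≤ m → x ≠ n → σ x < m := fun x hx hxn => by
      have h1 := fix_above_le hf hx
      have h2 : σ x ≠ m := fun e => hxn (σ.injective (e.trans htop.symm))
      omega
    -- the positions of an occurrence in `σ * swap n m` all lie in `{0, …, n}`
    intro i j k hij hjk h1 h2
    have hk : k ≤ n := by
      by_contra! hc
      rw [hf' k hc] at h2
      have := fix_above_le hf' (i := j)
      by_cases hj : j ≤ n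
      · have := this hj; omega
      · rw [hf' j (by omega)] at h2; omega
    simp only [Equiv.Perm.mul_apply] at h1 h2
    rw [Equiv.swap_apply_of_ne_of_ne (by omega) (by omega)] at h1
    rw [Equiv.swap_apply_of_ne_of_ne (a := n) (x := j) (by omega) (by omega)] at h2
    rw [Equiv.swap_apply_of_ne_of_ne (a := n) (x := i) (by omega) (by omega)] at h1
    rcases eq_or_ne k n with rfl | hkn
    · rw [Equiv.swap_apply_left] at h2
      exact ha i j m hij (by omega) h1 h2
    · rw [Equiv.swap_apply_of_ne_of_ne (by omega) (by omega)] at h2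
      exact ha i j k hij hjk h1 h2
  · intro σ hσ
    simp only [Finset.coe_filter, Set.mem_ofPred_eq, Finset.mem_coe, mem_avoidLast] at hσ ⊢
    obtain ⟨ha, hf, hn⟩ := hσ
    have hm : σ m = m := hf m (by omega)
    have hf' : ∀ i, m < i → (σ * Equiv.swap n m) i = i := by
      intro i hi
      rw [Equiv.Perm.mul_apply, Equiv.swap_apply_of_ne_of_ne (by omega) (by omega),
        hf _ (by omega)]
    refine ⟨⟨?_, hf', by simp [hn]⟩, by simp [hm]; omega⟩
    intro i j k hij hjk h1 h2
    have hk : k ≤ m := by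
      by_contra! hc
      rw [hf' k hc] at h2
      have := fix_above_le hf' (i := j)
      by_cases hj : j ≤ m
      · have := this hj; omega
      · rw [hf' j (by omega)] at h2; omega
    have hj : j ≠ n := by
      rintro rfl
      have := fix_above_le hf' (i := i) (by omega)
      simp only [Equiv.Perm.mul_apply, Equiv.swap_apply_left, hm] at h1
      simp only [Equiv.Perm.mul_apply] at this
      omega
    simp only [Equiv.Perm.mul_apply] at h1 h2
    rw [Equiv.swap_apply_of_ne_of_ne (by omega) (by omega)] at h1
    rw [Equiv.swap_apply_of_ne_of_ne (a := n) (x := j) (by omega) (by omega)] at h2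
    rw [Equiv.swap_apply_of_ne_of_ne (a := n) (x := i) (by omega) (by omega)] at h1
    rcases eq_or_ne k m with rfl | hkm
    · rw [Equiv.swap_apply_right] at h2
      exact ha i j n hij (by omega) h1 h2
    · rcases eq_or_ne k n with rfl | hkn
      · rw [Equiv.swap_apply_left, hm] at h2
        have := fix_above_le hf (i := j) (by omega)
        omega
      · rw [Equiv.swap_apply_of_ne_of_ne (by omega) (by omega)] at h2
        exact ha i j k hij hjk h1 h2
  · intro σ _
    simp [mul_assoc]
  · intro σ _
    simp [mul_assoc]

/-- The recurrence of the ballot triangle, obtained by sorting the avoiders by their penultimate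
value. -/
theorem card_avoidLast_succ {N : ℕ} {n m v : Fin N} (hnm : n.val + 1 = m.val) (hvm : v ≤ m) :
    (avoidLast m v).card = ∑ u ∈ Finset.Iic v, (avoidLast n u).card := by
  classical
  rw [← Finset.card_filter_add_card_filter_not (fun σ : Equiv.Perm (Fin N) => σ n < v),
    card_last_ge hnm hvm,
    Finset.card_eq_sum_card_fiberwise (f := fun σ : Equiv.Perm (Fin N) => σ n)
      (t := Finset.Iio v) (fun σ hσ => by simpa using (Finset.mem_filter.1 hσ).2),
    ← Finset.Iio_insert, Finset.sum_insert (by simp), add_comm]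
  congr 1
  refine Finset.sum_congr rfl fun u hu => ?_
  rw [← card_last_two hnm v (Finset.mem_Iio.1 hu) hvm, Finset.filter_filter]
  congr 1
  refine Finset.filter_congr fun σ _ => ?_
  simp only [Finset.mem_Iio] at hu
  constructor
  · exact fun h => h.2
  · exact fun h => ⟨h ▸ hu, h⟩

theorem sum_Iio_fin {N : ℕ} (f : ℕ → ℕ) (v : Fin N) :
    ∑ u ∈ Finset.Iio v, f u = ∑ u ∈ Finset.range v, f u := by
  rw [← Nat.Iio_eq_range, ← Fin.map_valEmbedding_Iio, Finset.sum_map]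
  rfl

theorem sum_Iic_fin {N : ℕ} (f : ℕ → ℕ) (v : Fin N) :
    ∑ u ∈ Finset.Iic v, f u = ∑ u ∈ Finset.range (v + 1), f u := by
  rw [← Finset.Iio_insert, Finset.sum_insert (by simp), sum_Iio_fin, Finset.sum_range_succ,
    add_comm]

/-- The avoiders of `{0, …, n}` with last value `v` form the ballot triangle. The case `v = n + 1`
(value zero) is included to let the induction run up to the diagonal. -/
theorem card_avoidLast {N : ℕ} (k : ℕ) (n v : Fin N) (hk : n.val = k) (hv : v.val ≤ k + 1) :
    (avoidLast n v).card = ballot (k + 1 - v) v := by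
  induction k generalizing n v with
  | zero =>
    have hid : ∀ σ : Equiv.Perm (Fin N), (∀ i, n < i → σ i = i) → σ = 1 := by
      intro σ hf
      ext i
      by_cases hi : n < i
      · simp [hf i hi]
      · have := fix_above_le hf (i := i) (by omega)
        simp only [Equiv.Perm.one_apply]
        omega
    rcases Nat.eq_zero_or_pos v.val with h0 | h0
    · obtain rfl : v = n := by omega
      have : avoidLast v v = {1} := by
        ext σ
        rw [mem_avoidLast, Finset.mem_singleton]
        constructor
        · exact fun h => hid σ h.2.1
        · rintro rfl
          exact ⟨fun i j k hij _ h _ => absurd h (by simpa using hij.le), by simp, by simp⟩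
      rw [this, h0, ballot_zero_right, Finset.card_singleton]
    · have h1 : v.val = 1 := by omega
      have : avoidLast n v = ∅ := by
        ext σ
        simp only [mem_avoidLast, Finset.notMem_empty, iff_false]
        rintro ⟨-, hf, hn⟩
        have := fix_above_le hf le_rfl
        omega
      rw [this, h1]
      simp [ballot_zero_left]
  | succ k ih =>
    rcases hv.lt_or_eq with hlt | heq
    · have hk' : k < N := by omega
      rw [card_avoidLast_succ (n := ⟨k, hk'⟩) (by simp [hk]) (by omega),
        show k + 1 + 1 - v.val = k + 2 - v.val by omega, ← sum_ballot_row k v (by omega),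
        ← sum_Iic_fin (fun u => ballot (k + 1 - u) u)]
      refine Finset.sum_congr rfl fun u hu => ih _ _ rfl ?_
      rw [Finset.mem_Iic] at hu
      omega
    · have : avoidLast n v = ∅ := by
        ext σ
        simp only [mem_avoidLast, Finset.notMem_empty, iff_false]
        rintro ⟨-, hf, hn⟩
        have := fix_above_le hf le_rfl
        omega
      rw [this, heq]
      simp [ballot_zero_left]

/-! ### Lower and upper parts -/

open Classical in
/-- 321-avoiders of `{0, …, b}` that do not fix the top element `b`. -/
noncomputable def lowerPart {N : ℕ} (b : Fin N) : Finset (Equiv.Perm (Fin N)) :=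
  {σ | Avoids321 σ ∧ (∀ i, b < i → σ i = i) ∧ σ b ≠ b}

open Classical in
/-- 321-avoiders of `{b, …, N - 1}` that do not fix the bottom element `b`. -/
noncomputable def upperPart {N : ℕ} (b : Fin N) : Finset (Equiv.Perm (Fin N)) :=
  {σ | Avoids321 σ ∧ (∀ i, i < b → σ i = i) ∧ σ b ≠ b}

/-- `π` has exactly one occurrence of 321, and its middle position is `b`. -/
def UniqueOccAt {N : ℕ} (b : Fin N) (π : Equiv.Perm (Fin N)) : Prop :=
  ∃ p q, p < b ∧ b < q ∧ π b < π p ∧ π q < π b ∧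
    ∀ i j k, i < j → j < k → π j < π i → π k < π j → i = p ∧ j = b ∧ k = q

theorem mem_lowerPart {N : ℕ} {b : Fin N} {σ : Equiv.Perm (Fin N)} :
    σ ∈ lowerPart b ↔ Avoids321 σ ∧ (∀ i, b < i → σ i = i) ∧ σ b ≠ b := by
  simp [lowerPart]

theorem mem_upperPart {N : ℕ} {b : Fin N} {σ : Equiv.Perm (Fin N)} :
    σ ∈ upperPart b ↔ Avoids321 σ ∧ (∀ i, i < b → σ i = i) ∧ σ b ≠ b := by
  simp [upperPart]

/-- The avoiders of `{0, …, b}` with last value below `b` form a partial row of the ballot triangle,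
whose sum is `C^{(3)}_{b-1}`; there are none for `b = 0`. -/
theorem card_lowerPart {N : ℕ} (b : Fin N) :
    (lowerPart b).card = if b.val = 0 then 0 else ballot 3 (b - 1) := by
  classical
  have h1 : (lowerPart b).card = ∑ u ∈ Finset.Iio b, (avoidLast b u).card := by
    rw [Finset.card_eq_sum_card_fiberwise (f := fun σ : Equiv.Perm (Fin N) => σ b)
      (t := Finset.Iio b)]
    · refine Finset.sum_congr rfl fun u hu => ?_
      congr 1
      ext σ
      rw [Finset.mem_Iio] at hu
      simp only [Finset.mem_filter, mem_lowerPart, mem_avoidLast]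
      constructor
      · exact fun h => ⟨h.1.1, h.1.2.1, h.2⟩
      · exact fun h => ⟨⟨h.1, h.2.1, by rw [h.2.2]; exact hu.ne⟩, h.2.2⟩
    · intro σ hσ
      obtain ⟨-, hf, hb⟩ := mem_lowerPart.1 hσ
      have := fix_above_le hf le_rfl
      simp only [Finset.coe_Iio, Set.mem_Iio]
      omega
  have h2 : ∑ u ∈ Finset.Iio b, (avoidLast b u).card =
      ∑ u ∈ Finset.Iio b, ballot (b + 1 - u) u := by
    refine Finset.sum_congr rfl fun u hu => card_avoidLast _ _ _ rfl ?_
    rw [Finset.mem_Iio] at hu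
    omega
  rw [h1, h2, sum_Iio_fin (fun u => ballot (b + 1 - u) u)]
  split_ifs with h0
  · simp [h0]
  · have := sum_ballot_row b (b - 1) (by omega)
    rwa [show b.val - 1 + 1 = b by omega, show b.val + 2 - (b.val - 1) = 3 by omega] at this

theorem avoids_rev {N : ℕ} {σ : Equiv.Perm (Fin N)} (h : Avoids321 σ) :
    Avoids321 (Fin.revPerm * σ * Fin.revPerm) := by
  intro i j k hij hjk h1 h2
  simp only [Equiv.Perm.mul_apply, Fin.revPerm_apply, Fin.rev_lt_rev] at h1 h2
  exact h _ _ _ (Fin.rev_lt_rev.2 hjk) (Fin.rev_lt_rev.2 hij) h2 h1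

/-- Conjugation by the order reversal `i ↦ N - 1 - i` exchanges lower and upper parts. -/
theorem card_upperPart {N : ℕ} (b : Fin N) : (upperPart b).card = (lowerPart b.rev).card := by
  refine Finset.card_nbij' (fun σ => Fin.revPerm * σ * Fin.revPerm)
    (fun σ => Fin.revPerm * σ * Fin.revPerm) ?_ ?_ ?_ ?_
  · intro σ hσ
    simp only [Finset.mem_coe, mem_lowerPart, mem_upperPart] at hσ ⊢
    obtain ⟨ha, hf, hb⟩ := hσ
    refine ⟨avoids_rev ha, fun i hi => ?_, ?_⟩
    · simp [hf i.rev (Fin.rev_lt_iff.2 hi)]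
    · simpa using hb
  · intro σ hσ
    simp only [Finset.mem_coe, mem_lowerPart, mem_upperPart] at hσ ⊢
    obtain ⟨ha, hf, hb⟩ := hσ
    refine ⟨avoids_rev ha, fun i hi => ?_, ?_⟩
    · simp [hf i.rev (Fin.rev_lt_rev.2 hi)]
    · simpa [Fin.rev_eq_iff] using hb
  · intro σ _
    ext i
    simp
  · intro σ _
    ext i
    simp

/-! ### Gluing -/

/-- The permutation glued from a lower part `σ` and an upper part `τ` overlapping in `b`. As words,
the permutations `σ = α b β a` and `τ = c γ b δ` (the letters `a` of `σ` and `c` of `τ` standing at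
position `b`) are glued to `α c β b γ a δ`. -/
def glue {N : ℕ} (b : Fin N) (σ τ : Equiv.Perm (Fin N)) : Equiv.Perm (Fin N) :=
  Equiv.swap (σ b) b * (τ * σ)

/-- The values of `glue b σ τ`, where `p` and `q` are the positions of the value `b` in `σ` and `τ`. -/
theorem glue_spec {N : ℕ} {b : Fin N} {σ τ : Equiv.Perm (Fin N)}
    (hσ : σ ∈ lowerPart b) (hτ : τ ∈ upperPart b) :
    ∃ p q, p < b ∧ b < q ∧ σ p = b ∧ τ q = b ∧ σ b < b ∧ b < τ b ∧
      glue b σ τ p = τ b ∧ glue b σ τ b = b ∧ glue b σ τ q = σ b ∧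
      (∀ x, x < b → x ≠ p → σ x < b ∧ glue b σ τ x = σ x) ∧
      (∀ x, b < x → x ≠ q → b < τ x ∧ glue b σ τ x = τ x) := by
  obtain ⟨-, hf, hb⟩ := mem_lowerPart.1 hσ
  obtain ⟨-, hg, hc⟩ := mem_upperPart.1 hτ
  have hσb : σ b < b := lt_of_le_of_ne (fix_above_le hf le_rfl) hb
  have hτb : b < τ b := lt_of_le_of_ne (fix_below_ge hg le_rfl) (Ne.symm hc)
  have hp : σ (σ.symm b) = b := by simp
  have hq : τ (τ.symm b) = b := by simp
  have hpb : σ.symm b < b := by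
    by_contra! h
    rcases h.lt_or_eq with h | h
    · rw [hf _ h] at hp; omega
    · rw [← h] at hp; omega
  have hqb : b < τ.symm b := by
    by_contra! h
    rcases h.lt_or_eq with h | h
    · rw [hg _ h] at hq; omega
    · rw [h] at hq; omega
  generalize σ.symm b = p at *
  generalize τ.symm b = q at *
  refine ⟨p, q, hpb, hqb, hp, hq, hσb, hτb, ?_, ?_, ?_, ?_, ?_⟩
  · simp only [glue, Equiv.Perm.mul_apply, hp]
    rw [Equiv.swap_apply_of_ne_of_ne] <;> omega
  · simp only [glue, Equiv.Perm.mul_apply]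
    rw [hg _ hσb, Equiv.swap_apply_left]
  · simp only [glue, Equiv.Perm.mul_apply]
    rw [hf _ hqb, hq, Equiv.swap_apply_right]
  · intro x hx hxp
    have h1 := fix_above_le hf hx.le
    have h2 : σ x ≠ b := fun e => hxp (σ.injective (e.trans hp.symm))
    have h3 : σ x ≠ σ b := fun e => hx.ne (σ.injective e)
    refine ⟨by omega, ?_⟩
    simp only [glue, Equiv.Perm.mul_apply]
    rw [hg _ (by omega), Equiv.swap_apply_of_ne_of_ne h3 h2]
  · intro x hx hxq
    have h1 := fix_below_ge hg hx.le
    have h2 : τ x ≠ b := fun e => hxq (τ.injective (e.trans hq.symm))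
    refine ⟨by omega, ?_⟩
    simp only [glue, Equiv.Perm.mul_apply]
    rw [hf _ hx, Equiv.swap_apply_of_ne_of_ne] <;> omega

/-- The lower part is recovered from the glued permutation by capping its values at `b`. -/
theorem glue_lower {N : ℕ} {b : Fin N} {σ τ : Equiv.Perm (Fin N)}
    (hσ : σ ∈ lowerPart b) (hτ : τ ∈ upperPart b) (x : Fin N) (hx : x < b) :
    σ x = min (glue b σ τ x) b := by
  obtain ⟨p, q, hp, hq, h1, h2, h3, h4, h5, h6, h7, h8, h9⟩ := glue_spec hσ hτ
  by_cases hxp : x = p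
  · subst hxp
    rw [h5, h1, min_eq_right h4.le]
  · obtain ⟨h10, h11⟩ := h8 x hx hxp
    rw [h11, min_eq_left h10.le]

/-- The upper part is recovered from the glued permutation by capping its values from below at `b`. -/
theorem glue_upper {N : ℕ} {b : Fin N} {σ τ : Equiv.Perm (Fin N)}
    (hσ : σ ∈ lowerPart b) (hτ : τ ∈ upperPart b) (x : Fin N) (hx : b < x) :
    τ x = max (glue b σ τ x) b := by
  obtain ⟨p, q, hp, hq, h1, h2, h3, h4, h5, h6, h7, h8, h9⟩ := glue_spec hσ hτ
  by_cases hxq : x = q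
  · subst hxq
    rw [h7, h2, max_eq_right h3.le]
  · obtain ⟨h10, h11⟩ := h9 x hx hxq
    rw [h11, max_eq_left h10.le]

/-- Two permutations that agree away from one point are equal. -/
theorem perm_eq_of_eq_off {N : ℕ} {b : Fin N} {σ τ : Equiv.Perm (Fin N)}
    (h : ∀ x, x ≠ b → σ x = τ x) : σ = τ := by
  ext x
  by_cases hx : x = b
  · subst hx
    have h1 : τ (τ.symm (σ x)) = σ x := by simp
    by_cases h2 : τ.symm (σ x) = x
    · rw [h2] at h1
      rw [h1]
    · rw [← h _ h2] at h1
      exact absurd (σ.injective h1) h2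
  · rw [h x hx]

theorem glue_injective {N : ℕ} {b : Fin N} {σ τ σ' τ' : Equiv.Perm (Fin N)}
    (hσ : σ ∈ lowerPart b) (hτ : τ ∈ upperPart b) (hσ' : σ' ∈ lowerPart b)
    (hτ' : τ' ∈ upperPart b) (h : glue b σ τ = glue b σ' τ') : σ = σ' ∧ τ = τ' := by
  constructor
  · refine perm_eq_of_eq_off (b := b) fun x hx => ?_
    rcases lt_or_gt_of_ne hx with hx | hx
    · rw [glue_lower hσ hτ x hx, glue_lower hσ' hτ' x hx, h]
    · rw [(mem_lowerPart.1 hσ).2.1 x hx, (mem_lowerPart.1 hσ').2.1 x hx]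
  · refine perm_eq_of_eq_off (b := b) fun x hx => ?_
    rcases lt_or_gt_of_ne hx with hx | hx
    · rw [(mem_upperPart.1 hτ).2.1 x hx, (mem_upperPart.1 hτ').2.1 x hx]
    · rw [glue_upper hσ hτ x hx, glue_upper hσ' hτ' x hx, h]

theorem uniqueOccAt_glue {N : ℕ} {b : Fin N} {σ τ : Equiv.Perm (Fin N)}
    (hσ : σ ∈ lowerPart b) (hτ : τ ∈ upperPart b) : UniqueOccAt b (glue b σ τ) := by
  obtain ⟨p, q, hp, hq, h1, h2, h3, h4, h5, h6, h7, h8, h9⟩ := glue_spec hσ hτ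
  have ha := (mem_lowerPart.1 hσ).1
  have hc := (mem_upperPart.1 hτ).1
  refine ⟨p, q, hp, hq, by omega, by omega, ?_⟩
  generalize glue b σ τ = π at *
  -- below `b` the relative order of the values of `π` is that of `σ`, above `b` that of `τ`
  have lo : ∀ x y, x < b → y < b → π y < π x → σ y < σ x := by
    intro x y hx hy h
    by_cases hxp : x = p
    · subst hxp
      have hyx : y ≠ x := by rintro rfl; omega
      have := h8 y hy hyx
      omega
    · have := h8 x hx hxp
      by_cases hyp : y = p
      · subst hyp; omega
      · have := h8 y hy hyp
        omega
  have hi : ∀ x y, b < x → b < y → π y < π x → τ y < τ x := by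
    intro x y hx hy h
    by_cases hyq : y = q
    · subst hyq
      have hyx : x ≠ y := by rintro rfl; omega
      have := h9 x hx hyx
      omega
    · have := h9 y hy hyq
      by_cases hxq : x = q
      · subst hxq; omega
      · have := h9 x hx hxq
        omega
  have big : ∀ x, x < b → b < π x → x = p := by
    intro x hx h
    by_contra hne
    have := h8 x hx hne
    omega
  have small : ∀ x, b < x → π x < b → x = q := by
    intro x hx h
    by_contra hne
    have := h9 x hx hne
    omega
  intro i j k hij hjk hji hkj
  rcases lt_trichotomy j b with hj | hj | hj
  · exfalso
    have hs := lo i j (by omega) hj hji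
    rcases lt_trichotomy k b with hk | hk | hk
    · exact ha i j k hij hjk hs (lo j k hj hk hkj)
    · subst hk
      have := big i (by omega) (by omega)
      have := big j (by omega) (by omega)
      omega
    · have hjp : j ≠ p := fun e => by
        have := big i (by omega) (by subst e; omega)
        omega
      have hj8 := h8 j hj hjp
      have hkq := small k hk (by omega)
      subst hkq
      exact ha i j b hij hj hs (by omega)
  · subst hj
    exact ⟨big i hij (by omega), rfl, small k hjk (by omega)⟩
  · exfalso
    have hs := hi j k hj (by omega) hkj
    rcases lt_trichotomy i b with hk | hk | hk
    · have hjq : j ≠ q := fun e => by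
        have := small k (by omega) (by subst e; omega)
        omega
      have hj9 := h9 j hj hjq
      have hip := big i hk (by omega)
      subst hip
      exact hc b j k hj hjk (by omega) hs
    · subst hk
      have := small j (by omega) (by omega)
      have := small k (by omega) (by omega)
      omega
    · exact hc i j k hij hjk (hi i j hk hj hji) hs

theorem lt_of_min_lt_min {α : Type*} [LinearOrder α] {x y b : α} (h : min x b < min y b) :
    x < y :=
  lt_imp_lt_of_le_imp_le (min_le_min_right b) h

theorem lt_of_max_lt_max {α : Type*} [LinearOrder α] {x y b : α} (h : max x b < max y b) :
    x < y :=
  lt_imp_lt_of_le_imp_le (max_le_max_right b) h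

/-- Every permutation with a unique 321, in positions `p < b < q`, is glued from its two capped
halves. Uniqueness forces all values before `b` except that at `p` to be below `π b`, and all values
after `b` except that at `q` to be above it; hence `b` is a fixed point. -/
theorem exists_glue {N : ℕ} {b : Fin N} {π : Equiv.Perm (Fin N)} (h : UniqueOccAt b π) :
    ∃ σ ∈ lowerPart b, ∃ τ ∈ upperPart b, glue b σ τ = π := by
  obtain ⟨p, q, hp, hq, hbp, hqb, huniq⟩ := h
  have lo : ∀ x, x < b → x ≠ p → π x < π b := by
    intro x hx hxp
    by_contra! hc
    have h1 : π b ≠ π x := fun e => hx.ne' (π.injective e)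
    exact hxp (huniq x b q hx hq (by omega) hqb).1
  have hi : ∀ x, b < x → x ≠ q → π b < π x := by
    intro x hx hxq
    by_contra! hc
    have h1 : π x ≠ π b := fun e => hx.ne' (π.injective e)
    exact hxq (huniq p b x hp hx hbp (by omega)).2.2
  -- after exchanging the values at `p` and `q`, exactly the positions below `b` carry values
  -- below `π b`
  have hb : π b = b := by
    have h1 : (Finset.Iio b).map (π * Equiv.swap p q).toEmbedding = Finset.Iio (π b) := by
      have key : ∀ x, (π * Equiv.swap p q) x < π b ↔ x < b := by
        intro x
        rw [Equiv.Perm.mul_apply]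
        rcases eq_or_ne x p with rfl | hxp
        · rw [Equiv.swap_apply_left]; omega
        rcases eq_or_ne x q with rfl | hxq
        · rw [Equiv.swap_apply_right]; omega
        rw [Equiv.swap_apply_of_ne_of_ne hxp hxq]
        rcases lt_trichotomy x b with hx | hx | hx
        · have := lo x hx hxp; omega
        · subst hx; omega
        · have := hi x hx hxq; omega
      ext y
      rw [Finset.mem_map_equiv, Finset.mem_Iio, Finset.mem_Iio, ← key]
      simp
    have h2 := congrArg Finset.card h1
    rw [Finset.card_map, Fin.card_Iio, Fin.card_Iio] at h2
    omega
  rw [hb] at lo hi hbp hqb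
  have inj : ∀ x y, π x = π y → x = y := fun x y e => π.injective e
  have hf : Function.Injective (fun x => if x < b then min (π x) b else if x = b then π q else x) := by
    intro x y hxy
    have h1 := inj x y
    have h2 := inj x q
    have h3 := inj y q
    have h4 := lo x
    have h5 := lo y
    dsimp only at hxy
    clear huniq inj lo hi
    generalize π x = πx at *
    generalize π y = πy at *
    grind
  have hg : Function.Injective (fun x => if b < x then max (π x) b else if x = b then π p else x) := by
    intro x y hxy
    have h1 := inj x y
    have h2 := inj x p
    have h3 := inj y p
    have h4 := hi x
    have h5 := hi y
    dsimp only at hxy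
    clear huniq inj lo hi
    generalize π x = πx at *
    generalize π y = πy at *
    grind
  obtain ⟨σ, hσ⟩ : ∃ σ : Equiv.Perm (Fin N), ∀ x,
      σ x = if x < b then min (π x) b else if x = b then π q else x :=
    ⟨Equiv.ofBijective _ (Finite.injective_iff_bijective.1 hf), fun _ => rfl⟩
  obtain ⟨τ, hτ⟩ : ∃ τ : Equiv.Perm (Fin N), ∀ x,
      τ x = if b < x then max (π x) b else if x = b then π p else x :=
    ⟨Equiv.ofBijective _ (Finite.injective_iff_bijective.1 hg), fun _ => rfl⟩
  have hσ1 : ∀ x, x < b → σ x = min (π x) b := fun x hx => by rw [hσ, if_pos hx]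
  have hσb : σ b = π q := by rw [hσ, if_neg (lt_irrefl b), if_pos rfl]
  have hσ2 : ∀ x, b < x → σ x = x := fun x hx => by
    rw [hσ, if_neg (by omega), if_neg (by omega)]
  have hτ1 : ∀ x, b < x → τ x = max (π x) b := fun x hx => by rw [hτ, if_pos hx]
  have hτb : τ b = π p := by rw [hτ, if_neg (lt_irrefl b), if_pos rfl]
  have hτ2 : ∀ x, x < b → τ x = x := fun x hx => by
    rw [hτ, if_neg (by omega), if_neg (by omega)]
  clear hσ hτ hf hg
  have hσm : σ ∈ lowerPart b := by
    refine mem_lowerPart.2 ⟨?_, hσ2, by rw [hσb]; omega⟩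
    intro i j k hij hjk h1 h2
    rcases lt_trichotomy k b with hk | hk | hk
    · rw [hσ1 k hk, hσ1 j (by omega)] at h2
      rw [hσ1 i (by omega), hσ1 j (by omega)] at h1
      have := huniq i j k hij hjk (lt_of_min_lt_min h1) (lt_of_min_lt_min h2)
      omega
    · subst hk
      rw [hσb, hσ1 j (by omega)] at h2
      rw [hσ1 i (by omega), hσ1 j (by omega)] at h1
      have := huniq i j q hij (by omega) (lt_of_min_lt_min h1) (lt_min_iff.1 h2).1
      omega
    · rw [hσ2 k hk] at h2
      have h3 := fix_above_le hσ2 (i := j)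
      have h4 := hσ2 j
      omega
  have hτm : τ ∈ upperPart b := by
    refine mem_upperPart.2 ⟨?_, hτ2, by rw [hτb]; omega⟩
    intro i j k hij hjk h1 h2
    rcases lt_trichotomy i b with hk | hk | hk
    · rw [hτ2 i hk] at h1
      have h3 := fix_below_ge hτ2 (i := j)
      have h4 := hτ2 j
      omega
    · subst hk
      rw [hτb, hτ1 j (by omega)] at h1
      rw [hτ1 k (by omega), hτ1 j (by omega)] at h2
      have := huniq p j k (by omega) hjk (max_lt_iff.1 h1).1 (lt_of_max_lt_max h2)
      omega
    · rw [hτ1 k (by omega), hτ1 j (by omega)] at h2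
      rw [hτ1 i (by omega), hτ1 j (by omega)] at h1
      have := huniq i j k hij hjk (lt_of_max_lt_max h1) (lt_of_max_lt_max h2)
      omega
  refine ⟨σ, hσm, τ, hτm, ?_⟩
  obtain ⟨p', q', hp', hq', g1, g2, g3, g4, g5, g6, g7, g8, g9⟩ := glue_spec hσm hτm
  have hpp : p' = p := by
    by_contra hne
    have h1 := lo p' hp' hne
    rw [hσ1 p' hp', min_eq_left h1.le] at g1
    omega
  have hqq : q' = q := by
    by_contra hne
    have h1 := hi q' hq' hne
    rw [hτ1 q' hq', max_eq_left h1.le] at g2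
    omega
  subst hpp hqq
  ext x
  rcases lt_trichotomy x b with hx | hx | hx
  · by_cases hxp : x = p'
    · rw [hxp, g5, hτb]
    · rw [(g8 x hx hxp).2, hσ1 x hx, min_eq_left (lo x hx hxp).le]
  · rw [hx, g6, hb]
  · by_cases hxq : x = q'
    · rw [hxq, g7, hσb]
    · rw [(g9 x hx hxq).2, hτ1 x hx, max_eq_left (hi x hx hxq).le]

open Classical in
theorem card_uniqueOccAt {N : ℕ} (b : Fin N) :
    ({π | UniqueOccAt b π} : Finset (Equiv.Perm (Fin N))).card =
      (lowerPart b).card * (lowerPart b.rev).card := by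
  rw [← card_upperPart, ← Finset.card_product]
  symm
  refine Finset.card_nbij (fun s => glue b s.1 s.2) ?_ ?_ ?_
  · intro s hs
    obtain ⟨h1, h2⟩ := Finset.mem_product.1 hs
    simpa using uniqueOccAt_glue h1 h2
  · intro s hs t ht hst
    obtain ⟨h1, h2⟩ := Finset.mem_product.1 hs
    obtain ⟨h3, h4⟩ := Finset.mem_product.1 ht
    exact Prod.ext_iff.2 (glue_injective h1 h2 h3 h4 hst)
  · intro π hπ
    obtain ⟨σ, hσ, τ, hτ, h⟩ := exists_glue (b := b) (π := π) (by simpa using hπ)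
    exact ⟨(σ, τ), Finset.mem_product.2 ⟨hσ, hτ⟩, h⟩

/-! ### Permutations with exactly one 321 -/

theorem occ321Count_eq_one_iff {N : ℕ} (π : Equiv.Perm (Fin N)) :
    occ321Count N π = 1 ↔ ∃ b, UniqueOccAt b π := by
  rw [occ321Count, Nat.card_eq_one_iff_exists]
  constructor
  · rintro ⟨⟨⟨p, b, q⟩, h1, h2, h3, h4⟩, huniq⟩
    refine ⟨b, p, q, h1, h2, h4, h3, fun i j k hij hjk hji hkj => ?_⟩
    have := huniq ⟨(i, j, k), hij, hjk, hkj, hji⟩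
    simpa using this
  · rintro ⟨b, p, q, h1, h2, h4, h3, huniq⟩
    refine ⟨⟨(p, b, q), h1, h2, h3, h4⟩, ?_⟩
    rintro ⟨⟨i, j, k⟩, hij, hjk, hkj, hji⟩
    simpa using huniq i j k hij hjk hji hkj

theorem card_one321 (N : ℕ) :
    Nat.card {π : Equiv.Perm (Fin N) // occ321Count N π = 1} =
      ∑ b : Fin N, (lowerPart b).card * (lowerPart b.rev).card := by
  classical
  rw [Nat.card_eq_fintype_card, Fintype.card_subtype]
  have h : (Finset.univ.filter fun π : Equiv.Perm (Fin N) => occ321Count N π = 1) =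
      Finset.univ.biUnion fun b => {π | UniqueOccAt b π} := by
    ext π
    simp [occ321Count_eq_one_iff]
  rw [h, Finset.card_biUnion]
  · exact Finset.sum_congr rfl fun b _ => card_uniqueOccAt b
  · intro b _ c _ hbc
    refine Finset.disjoint_left.2 fun π h1 h2 => hbc ?_
    simp only [Finset.mem_filter, Finset.mem_univ, true_and] at h1 h2
    obtain ⟨p, q, hp, hq, hbp, hqb, -⟩ := h1
    obtain ⟨_, _, _, _, _, _, huniq⟩ := h2
    exact (huniq p b q hp hq hbp hqb).2.1

/-- (Noonan) For `n ≥ 3`, the number of permutations of `[n]` containing exactly one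
occurrence of the pattern 321 is `C^{(6)}_{n-3} = (3/n)·C(2n, n-3)`. -/
theorem noonan_one321_count (n : ℕ) (hn : 3 ≤ n) :
    Nat.card {π : Equiv.Perm (Fin n) // occ321Count n π = 1} = ballot 6 (n - 3) ∧
    n * ballot 6 (n - 3) = 3 * Nat.choose (2 * n) (n - 3) := by
  obtain ⟨m, rfl⟩ : ∃ m, n = m + 3 := ⟨n - 3, by omega⟩
  rw [Nat.add_sub_cancel]
  refine ⟨?_, mul_ballot_six m⟩
  let d : ℕ → ℕ := fun b => if b = 0 then 0 else ballot 3 (b - 1)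
  have h : ∀ b : Fin (m + 3), (lowerPart b).card * (lowerPart b.rev).card =
      d b * d (m + 2 - b) := by
    intro b
    rw [card_lowerPart, card_lowerPart, Fin.val_rev,
      show m + 3 - (b.val + 1) = m + 2 - b.val by omega]
  -- the two extreme values of `b` contribute zero
  rw [card_one321, Finset.sum_congr rfl fun b _ => h b,
    Fin.sum_univ_eq_sum_range (fun b => d b * d (m + 2 - b)) (m + 3), Finset.sum_range_succ,
    Finset.sum_range_succ', ← sum_ballot_three]
  simp only [d, Nat.sub_self, if_true, mul_zero, zero_mul, add_zero]
  refine Finset.sum_congr rfl fun i hi => ?_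
  rw [Finset.mem_range] at hi
  rw [if_neg (by omega), if_neg (by omega), Nat.add_sub_cancel,
    show m + 2 - (i + 1) - 1 = m - i by omega]
end

section
/- (Robertson) For n ≥ 2, the number of permutations of [n] that avoid the pattern 123 and contain exactly one occurrence of the pattern 132 is (n−2)·2^{n−3}, where this quantity is interpreted as 0 when n = 2. -/
/-!
The proof deletes the first letter. A permutation of `[n+1]` is a first letter `p` together with
a permutation `σ` of `[n]` (`insertFirst p σ`). An occurrence of 123 or 132 that uses the first
letter is a pair of letters of `σ`, both exceeding `p`, which is ascending for 123 and descending
for 132; the others are occurrences in `σ` (`occ123Count_insertFirst`, `occ132Count_insertFirst`).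

Any two later letters exceeding `p` give an occurrence of one of the two patterns. Hence a
permutation of `[n+1]` avoids both patterns exactly when `σ` does and `p` is one of the two largest
values, which gives `2 ^ (n - 1)` permutations of `[n]` avoiding both (`card_avoidBoth`).

For permutations avoiding 123 with one occurrence of 132: if `p` is one of the two largest values,
`σ` has the same property; if `p` is the third largest, `σ` avoids both patterns and its
largest letter precedes its second largest, which forces `σ` to start with its largest letter
(`avoidBoth_top_first_iff`); a smaller `p` creates a 123 or three occurrences of 132. With `f n`
the number sought this gives `f (n+1) = 2 f n + 2 ^ (n-2)`, hence the formula.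
-/


/-- The number of occurrences of the pattern 123 in a permutation of `{0,…,n-1}`:
triples of positions `i < j < k` with `π i < π j < π k`. -/
noncomputable def occ123Count (n : ℕ) (π : Equiv.Perm (Fin n)) : ℕ :=
  Nat.card {t : Fin n × Fin n × Fin n //
    t.1 < t.2.1 ∧ t.2.1 < t.2.2 ∧ π t.1 < π t.2.1 ∧ π t.2.1 < π t.2.2}

/-- The number of occurrences of the pattern 132 in a permutation of `{0,…,n-1}`:
triples of positions `i < j < k` with `π i < π k < π j`. -/
noncomputable def occ132Count (n : ℕ) (π : Equiv.Perm (Fin n)) : ℕ :=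
  Nat.card {t : Fin n × Fin n × Fin n //
    t.1 < t.2.1 ∧ t.2.1 < t.2.2 ∧ π t.1 < π t.2.2 ∧ π t.2.2 < π t.2.1}

open Finset

/-! ### Deleting the first letter -/

/-- The permutation of `[n+1]` with first letter `p` whose remaining letters are in the relative
order prescribed by `σ`. -/
def insertFirst {n : ℕ} (p : Fin (n + 1)) (σ : Equiv.Perm (Fin n)) : Equiv.Perm (Fin (n + 1)) :=
  (finSuccEquiv n).trans ((Equiv.optionCongr σ).trans (finSuccEquiv' p).symm)

@[simp] lemma insertFirst_zero {n : ℕ} (p : Fin (n + 1)) (σ : Equiv.Perm (Fin n)) :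
    insertFirst p σ 0 = p := by
  simp [insertFirst]

@[simp] lemma insertFirst_succ {n : ℕ} (p : Fin (n + 1)) (σ : Equiv.Perm (Fin n)) (i : Fin n) :
    insertFirst p σ i.succ = p.succAbove (σ i) := by
  simp [insertFirst]

lemma insertFirst_bijective (n : ℕ) : Function.Bijective
    (fun x : Fin (n + 1) × Equiv.Perm (Fin n) => insertFirst x.1 x.2) := by
  rw [Fintype.bijective_iff_injective_and_card]
  constructor
  · rintro ⟨p, σ⟩ ⟨q, τ⟩ h
    simp only at h
    have hp : p = q := by
      have := congrArg (fun π => π 0) h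
      simpa using this
    subst hp
    congr 1
    ext i
    have := congrArg (fun π => π i.succ) h
    simp only [insertFirst_succ] at this
    rw [Fin.succAbove_right_injective this]
  · simp [Fintype.card_perm, Nat.factorial_succ]

open Classical in
/-- Counting permutations of `[n+1]` by their first letter. -/
lemma card_perm_eq_sum {n : ℕ} (P : Equiv.Perm (Fin (n + 1)) → Prop) :
    Nat.card {π // P π} = ∑ p, Nat.card {σ : Equiv.Perm (Fin n) // P (insertFirst p σ)} := by
  simp only [Nat.card_eq_fintype_card, Fintype.card_subtype, card_filter]
  rw [← Fintype.sum_prod_type' (f := fun p σ => if P (insertFirst p σ) then 1 else 0)]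
  exact (Function.Bijective.sum_comp (insertFirst_bijective n)
    (fun π => if P π then 1 else 0)).symm

/-! ### Occurrences that use the first letter -/

/-- Pairs of positions of `σ` carrying an ascending pair of letters, both of which exceed the
first letter in `insertFirst p σ`. -/
def ascAbove {n : ℕ} (p : Fin (n + 1)) (σ : Equiv.Perm (Fin n)) : Finset (Fin n × Fin n) :=
  {t | t.1 < t.2 ∧ p ≤ (σ t.1).castSucc ∧ σ t.1 < σ t.2}

/-- Pairs of positions of `σ` carrying a descending pair of letters, both of which exceed the
first letter in `insertFirst p σ`. -/
def descAbove {n : ℕ} (p : Fin (n + 1)) (σ : Equiv.Perm (Fin n)) : Finset (Fin n × Fin n) :=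
  {t | t.1 < t.2 ∧ p ≤ (σ t.2).castSucc ∧ σ t.2 < σ t.1}

lemma occ123Count_insertFirst {n : ℕ} (p : Fin (n + 1)) (σ : Equiv.Perm (Fin n)) :
    occ123Count (n + 1) (insertFirst p σ) = #(ascAbove p σ) + occ123Count n σ := by
  simp only [occ123Count, ascAbove, Nat.card_eq_fintype_card, Fintype.card_subtype, card_filter,
    Fintype.sum_prod_type, Fin.sum_univ_succ]
  simp [Fin.lt_succAbove_iff_le_castSucc]

lemma occ132Count_insertFirst {n : ℕ} (p : Fin (n + 1)) (σ : Equiv.Perm (Fin n)) :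
    occ132Count (n + 1) (insertFirst p σ) = #(descAbove p σ) + occ132Count n σ := by
  simp only [occ132Count, descAbove, Nat.card_eq_fintype_card, Fintype.card_subtype, card_filter,
    Fintype.sum_prod_type, Fin.sum_univ_succ]
  simp [Fin.lt_succAbove_iff_le_castSucc]

/-- Two positions of `σ` whose letters exceed `p` contribute a pair to `ascAbove` or
`descAbove`. -/
lemma mem_above {n : ℕ} {p : Fin (n + 1)} {σ : Equiv.Perm (Fin n)} {x y : Fin n}
    (hx : p ≤ x.castSucc) (hxy : x < y) :
    (σ.symm x, σ.symm y) ∈ ascAbove p σ ∨ (σ.symm y, σ.symm x) ∈ descAbove p σ := by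
  have hne : σ.symm x ≠ σ.symm y := fun h => hxy.ne (σ.symm.injective h)
  rcases hne.lt_or_gt with h | h
  · left; simp [ascAbove, h, hx, hxy]
  · right; simp [descAbove, h, hx, hxy]

/-- At most one letter of `σ` exceeds a first letter `p` among the two largest values. -/
lemma above_eq_empty {n : ℕ} {p : Fin (n + 2)} (hp : n ≤ p.val) (σ : Equiv.Perm (Fin (n + 1))) :
    ascAbove p σ = ∅ ∧ descAbove p σ = ∅ := by
  constructor
  · refine filter_eq_empty_iff.2 ?_
    rintro ⟨i, j⟩ - ⟨-, h1, h2⟩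
    simp only [Fin.le_def, Fin.lt_def, Fin.val_castSucc] at h1 h2
    have := (σ j).isLt
    omega
  · refine filter_eq_empty_iff.2 ?_
    rintro ⟨i, j⟩ - ⟨-, h1, h2⟩
    simp only [Fin.le_def, Fin.lt_def, Fin.val_castSucc] at h1 h2
    have := (σ i).isLt
    omega

/-! ### Which first letters are allowed -/

/-- `π` avoids both 123 and 132. -/
def AvoidBoth (n : ℕ) (π : Equiv.Perm (Fin n)) : Prop :=
  occ123Count n π = 0 ∧ occ132Count n π = 0

/-- `π` avoids 123 and has exactly one occurrence of 132. -/
def AvoidOne (n : ℕ) (π : Equiv.Perm (Fin n)) : Prop :=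
  occ123Count n π = 0 ∧ occ132Count n π = 1

lemma avoidBoth_insertFirst_iff {n : ℕ} (p : Fin (n + 2)) (σ : Equiv.Perm (Fin (n + 1))) :
    AvoidBoth (n + 2) (insertFirst p σ) ↔ n ≤ p.val ∧ AvoidBoth (n + 1) σ := by
  unfold AvoidBoth
  rw [occ123Count_insertFirst, occ132Count_insertFirst]
  by_cases hp : n ≤ p.val
  · simp [above_eq_empty hp σ, hp]
  · simp only [hp, false_and, iff_false]
    rintro ⟨h1, h2⟩
    have h1 : ascAbove p σ = ∅ := card_eq_zero.1 (by omega)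
    have h2 : descAbove p σ = ∅ := card_eq_zero.1 (by omega)
    have := mem_above (p := p) (σ := σ) (x := ⟨n - 1, by omega⟩) (y := ⟨n, by omega⟩)
      (by simp only [Fin.le_def, Fin.val_castSucc]; omega) (by simp only [Fin.lt_def]; omega)
    simp [h1, h2] at this

lemma avoidOne_insertFirst_iff_of_le {n : ℕ} {p : Fin (n + 2)} (hp : n ≤ p.val)
    (σ : Equiv.Perm (Fin (n + 1))) :
    AvoidOne (n + 2) (insertFirst p σ) ↔ AvoidOne (n + 1) σ := by
  unfold AvoidOne
  rw [occ123Count_insertFirst, occ132Count_insertFirst]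
  simp [above_eq_empty hp σ]

/-- Three letters of `σ` exceed a first letter below the three largest values; unless two of them
ascend, they give several descending pairs. -/
lemma not_avoidOne_insertFirst {n : ℕ} {p : Fin (n + 3)} (hp : p.val < n)
    (σ : Equiv.Perm (Fin (n + 2))) : ¬ AvoidOne (n + 3) (insertFirst p σ) := by
  unfold AvoidOne
  rw [occ123Count_insertFirst, occ132Count_insertFirst]
  rintro ⟨h1, h2⟩
  have h1 : ascAbove p σ = ∅ := card_eq_zero.1 (by omega)
  have a := mem_above (p := p) (σ := σ) (x := ⟨n - 1, by omega⟩) (y := ⟨n, by omega⟩)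
    (by simp only [Fin.le_def, Fin.val_castSucc]; omega) (by simp only [Fin.lt_def]; omega)
  have b := mem_above (p := p) (σ := σ) (x := ⟨n, by omega⟩) (y := ⟨n + 1, by omega⟩)
    (by simp only [Fin.le_def, Fin.val_castSucc]; omega) (by simp only [Fin.lt_def]; omega)
  simp only [h1, notMem_empty, false_or] at a b
  have := card_le_one.1 (show #(descAbove p σ) ≤ 1 by omega) _ a _ b
  simp at this

/-- If both patterns are avoided, the largest letter precedes the second largest exactly when it
comes first. -/
lemma avoidBoth_top_first_iff {n : ℕ} {σ : Equiv.Perm (Fin (n + 2))} (h : AvoidBoth (n + 2) σ) :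
    σ.symm (Fin.last (n + 1)) < σ.symm (Fin.last n).castSucc ↔ σ 0 = Fin.last (n + 1) := by
  obtain ⟨⟨p, τ⟩, rfl⟩ := (insertFirst_bijective _).2 σ
  simp only at h ⊢
  have hp := ((avoidBoth_insertFirst_iff p τ).1 h).1
  constructor
  · intro hlt
    by_contra hne
    have h0 : insertFirst p τ 0 = (Fin.last n).castSucc := by
      rw [insertFirst_zero] at hne ⊢
      have := Fin.val_ne_of_ne hne
      have := p.isLt
      ext
      simp only [Fin.val_last, Fin.val_castSucc] at *
      omega
    rw [← h0, Equiv.symm_apply_apply] at hlt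
    exact Fin.not_lt_zero _ hlt
  · intro h0
    have hz : (insertFirst p τ).symm (Fin.last (n + 1)) = 0 := by
      rw [← h0, Equiv.symm_apply_apply]
    rw [hz]
    refine Fin.pos_of_ne_zero fun h' => ?_
    rw [← hz] at h'
    have := (insertFirst p τ).symm.injective h'
    simp [Fin.ext_iff] at this

/-- When the first letter is the third largest value, it forms exactly one occurrence with the two
larger letters, and this must be a 132. -/
lemma avoidOne_insertFirst_third_iff {n : ℕ} {p : Fin (n + 3)} (hp : p.val = n)
    (σ : Equiv.Perm (Fin (n + 2))) :
    AvoidOne (n + 3) (insertFirst p σ) ↔ AvoidBoth (n + 2) σ ∧ σ 0 = Fin.last (n + 1) := by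
  have key : AvoidOne (n + 3) (insertFirst p σ) ↔
      AvoidBoth (n + 2) σ ∧ σ.symm (Fin.last (n + 1)) < σ.symm (Fin.last n).castSucc := by
    unfold AvoidOne AvoidBoth
    rw [occ123Count_insertFirst, occ132Count_insertFirst]
    have hm := mem_above (p := p) (σ := σ) (x := (Fin.last n).castSucc) (y := Fin.last (n + 1))
      (by simp [Fin.le_def, hp]) (by simp [Fin.lt_def])
    -- Only the two largest letters of `σ` exceed `p`.
    have hval : ∀ x y : Fin (n + 2), p ≤ x.castSucc → x < y →
        x = (Fin.last n).castSucc ∧ y = Fin.last (n + 1) := by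
      intro x y hx hxy
      have := y.isLt
      simp only [Fin.le_def, Fin.lt_def, Fin.ext_iff, Fin.val_castSucc, Fin.val_last] at *
      omega
    have hasc : ∀ t ∈ ascAbove p σ,
        σ.symm (Fin.last n).castSucc < σ.symm (Fin.last (n + 1)) := by
      rintro ⟨i, j⟩ ht
      simp only [ascAbove, mem_filter, mem_univ, true_and] at ht
      obtain ⟨h1, h2⟩ := hval _ _ ht.2.1 ht.2.2
      rw [← h1, ← h2]
      simpa using ht.1
    have hdesc : ∀ t ∈ descAbove p σ,
        t = (σ.symm (Fin.last (n + 1)), σ.symm (Fin.last n).castSucc) := by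
      rintro ⟨i, j⟩ ht
      simp only [descAbove, mem_filter, mem_univ, true_and] at ht
      obtain ⟨h1, h2⟩ := hval _ _ ht.2.1 ht.2.2
      rw [← h1, ← h2]
      simp
    have hle : #(descAbove p σ) ≤ 1 :=
      card_le_one.2 fun a ha b hb => (hdesc a ha).trans (hdesc b hb).symm
    constructor
    · rintro ⟨h1, h2⟩
      have he : ascAbove p σ = ∅ := card_eq_zero.1 (by omega)
      simp only [he, notMem_empty, false_or] at hm
      have := card_pos.2 ⟨_, hm⟩
      refine ⟨⟨by omega, by omega⟩, ?_⟩
      simp only [descAbove, mem_filter] at hm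
      exact hm.2.1
    · rintro ⟨⟨h1, h2⟩, hlt⟩
      have he : ascAbove p σ = ∅ := by
        refine eq_empty_of_forall_notMem fun t ht => ?_
        exact lt_asymm hlt (hasc t ht)
      simp only [he, notMem_empty, false_or] at hm
      have := card_pos.2 ⟨_, hm⟩
      rw [he, card_empty]
      omega
  rw [key]
  exact and_congr_right fun h => avoidBoth_top_first_iff h

/-! ### Counting -/

lemma card_avoidBoth (n : ℕ) : Nat.card {π // AvoidBoth (n + 1) π} = 2 ^ n := by
  induction n with
  | zero =>
    have : ∀ π, AvoidBoth 1 π := fun π => by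
      constructor <;>
      · refine Nat.card_eq_zero.2 (Or.inl ⟨?_⟩)
        rintro ⟨⟨i, j, k⟩, h, -⟩
        exact h.ne (Subsingleton.elim _ _)
    simp [this]
  | succ n ih =>
    rw [card_perm_eq_sum, Fin.sum_univ_castSucc, Fin.sum_univ_castSucc]
    simp only [avoidBoth_insertFirst_iff]
    have h : ∀ i : Fin n, Nat.card {σ // n ≤ i.val ∧ AvoidBoth (n + 1) σ} = 0 := fun i => by
      simp [i.isLt.not_ge]
    simp [ih, h, pow_succ, mul_two]

lemma card_avoidBoth_top_first (n : ℕ) :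
    Nat.card {π // AvoidBoth (n + 2) π ∧ π 0 = Fin.last (n + 1)} = 2 ^ n := by
  rw [card_perm_eq_sum, Fin.sum_univ_castSucc]
  simp only [avoidBoth_insertFirst_iff, insertFirst_zero]
  simp [card_avoidBoth, Fin.ext_iff, Fin.val_castSucc, (Fin.is_lt _).ne]

lemma card_avoidOne_two : Nat.card {π // AvoidOne 2 π} = 0 := by
  refine Nat.card_eq_zero.2 (Or.inl ⟨?_⟩)
  rintro ⟨π, -, h⟩
  have : occ132Count 2 π = 0 := by
    refine Nat.card_eq_zero.2 (Or.inl ⟨?_⟩)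
    rintro ⟨⟨i, j, k⟩, h1, h2, -⟩
    simp only [Fin.lt_def] at h1 h2
    omega
  omega

lemma card_avoidOne_succ (n : ℕ) : Nat.card {π // AvoidOne (n + 3) π} =
    2 * Nat.card {π // AvoidOne (n + 2) π} + 2 ^ n := by
  rw [card_perm_eq_sum, Fin.sum_univ_castSucc, Fin.sum_univ_castSucc, Fin.sum_univ_castSucc]
  have h0 : ∀ (q : Fin n) (σ : Equiv.Perm (Fin (n + 2))),
      ¬ AvoidOne (n + 3) (insertFirst q.castSucc.castSucc.castSucc σ) :=
    fun q => not_avoidOne_insertFirst (by simp)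
  have h1 : ∀ σ : Equiv.Perm (Fin (n + 2)), AvoidOne (n + 3)
      (insertFirst (Fin.last n).castSucc.castSucc σ) ↔ _ :=
    avoidOne_insertFirst_third_iff (by simp)
  have h2 : ∀ σ : Equiv.Perm (Fin (n + 2)), AvoidOne (n + 3)
      (insertFirst (Fin.last (n + 1)).castSucc σ) ↔ _ :=
    avoidOne_insertFirst_iff_of_le (by simp)
  have h3 : ∀ σ : Equiv.Perm (Fin (n + 2)), AvoidOne (n + 3)
      (insertFirst (Fin.last (n + 2)) σ) ↔ _ :=
    avoidOne_insertFirst_iff_of_le (by simp)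
  simp only [h0, h1, h2, h3, card_avoidBoth_top_first]
  simp
  ring

lemma card_avoidOne (n : ℕ) : Nat.card {π // AvoidOne (n + 2) π} = n * 2 ^ (n - 1) := by
  induction n with
  | zero => simpa using card_avoidOne_two
  | succ n ih =>
    rw [card_avoidOne_succ, ih]
    cases n with
    | zero => simp
    | succ m =>
      simp only [Nat.add_sub_cancel]
      ring

/-- (Robertson) For `n ≥ 2`, the number of permutations of `[n]` avoiding the pattern
123 and containing exactly one occurrence of the pattern 132 is `(n-2)·2^(n-3)`
(interpreted as `0` when `n = 2`, as truncated subtraction gives). -/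
theorem robertson_avoid123_one132 (n : ℕ) (hn : 2 ≤ n) :
    Nat.card {π : Equiv.Perm (Fin n) // occ123Count n π = 0 ∧ occ132Count n π = 1}
      = (n - 2) * 2 ^ (n - 3) := by
  obtain ⟨m, rfl⟩ := Nat.exists_eq_add_of_le' hn
  exact card_avoidOne m
end
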